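/- In the metric space of pure states with trace distance, the ε-expansion of a closed ball of radius r centered at a pure state c equals the closed ball of radius r' = r√(1−ε²) + ε√(1−r²) centered at c, for r, ε ∈ [0,1] with corresponding Bures angles summing to at most π/2. -/

import Mathlib

open scoped InnerProductSpace

/-- Trace distance between (unit-vector representatives of) pure states. -/
noncomputable def traceDist {n : ℕ} (u v : EuclideanSpace ℂ (Fin n)) : ℝ :=
  Real.sqrt (1 - ‖⟪u, v⟫_ℂ‖ ^ 2)

/-- The set of pure states (unit vectors). -/
def pureStates (n : ℕ) : Set (EuclideanSpace ℂ (Fin n)) := {x | ‖x‖ = 1}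

/-- Closed ball of pure states of radius `r` around `c` in trace distance. -/
def pureSphere {n : ℕ} (c : EuclideanSpace ℂ (Fin n)) (r : ℝ) :
    Set (EuclideanSpace ℂ (Fin n)) :=
  {x ∈ pureStates n | traceDist x c ≤ r}

/-- The `ε`-expansion of a set of pure states in trace distance. -/
def pureExpansion {n : ℕ} (S : Set (EuclideanSpace ℂ (Fin n))) (ε : ℝ) :
    Set (EuclideanSpace ℂ (Fin n)) :=
  {x ∈ pureStates n | ∃ y ∈ S, traceDist x y ≤ ε}

theorem le_of_sq_le_sq_aux {a b : ℝ} (h : a ^ 2 ≤ b ^ 2) (hb : 0 ≤ b) : a ≤ b :=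
  abs_le_of_sq_le_sq' h hb |>.2

theorem traceDist_le_iff_aux {n : ℕ} (u v : EuclideanSpace ℂ (Fin n)) (ρ K : ℝ) (h0 : 0 ≤ ρ)
    (hK : 0 ≤ K) (h : ρ ^ 2 + K ^ 2 = 1) : traceDist u v ≤ ρ ↔ K ≤ ‖⟪u, v⟫_ℂ‖ := by
  unfold traceDist
  rw [Real.sqrt_le_left h0, ← pow_le_pow_iff_left₀ hK (norm_nonneg _) two_ne_zero]
  constructor <;> intro h <;> linarith

theorem norm_sq_residual {n : ℕ} (x y : EuclideanSpace ℂ (Fin n)) (hx : ‖x‖ = 1) (hy : ‖y‖ = 1) :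
    ‖x - ⟪y, x⟫_ℂ • y‖ ^ 2 = 1 - ‖⟪y, x⟫_ℂ‖ ^ 2 := by
  rw [@norm_sub_sq ℂ, inner_smul_right, norm_smul, hx, hy, inner_mul_symm_re_eq_norm, norm_mul,
    norm_inner_symm x y]
  ring

theorem forward_aux {n : ℕ} (x y c : EuclideanSpace ℂ (Fin n)) (hx : ‖x‖ = 1) (hy : ‖y‖ = 1)
    (hc : ‖c‖ = 1) (A B r ε : ℝ) (hA : 0 ≤ A) (hB : 0 ≤ B) (hr : 0 ≤ r) (hε : 0 ≤ ε)
    (hAr : r ^ 2 + A ^ 2 = 1) (hBε : ε ^ 2 + B ^ 2 = 1)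
    (h1 : B ≤ ‖⟪x, y⟫_ℂ‖) (h2 : A ≤ ‖⟪y, c⟫_ℂ‖) : A * B - r * ε ≤ ‖⟪x, c⟫_ℂ‖ := by
  have hyy : ⟪y, y⟫_ℂ = 1 := by rw [inner_self_eq_norm_sq_to_K, hy]; simp
  have key : ⟪x, y⟫_ℂ * ⟪y, c⟫_ℂ
      = ⟪x, c⟫_ℂ - ⟪x - ⟪y, x⟫_ℂ • y, c - ⟪y, c⟫_ℂ • y⟫_ℂ := by
    simp only [inner_sub_left, inner_sub_right, inner_smul_left, inner_smul_right, hyy,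
      inner_conj_symm]
    ring
  have e1 : ‖x - ⟪y, x⟫_ℂ • y‖ ≤ ε := by
    refine le_of_sq_le_sq_aux ?_ hε
    rw [norm_sq_residual x y hx hy, norm_inner_symm]
    nlinarith
  have e2 : ‖c - ⟪y, c⟫_ℂ • y‖ ≤ r := by
    refine le_of_sq_le_sq_aux ?_ hr
    rw [norm_sq_residual c y hc hy]
    nlinarith
  have e3 : ‖⟪x - ⟪y, x⟫_ℂ • y, c - ⟪y, c⟫_ℂ • y⟫_ℂ‖ ≤ ε * r :=
    (norm_inner_le_norm _ _).trans (mul_le_mul e1 e2 (norm_nonneg _) hε)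
  have e4 := norm_sub_le (⟪x, c⟫_ℂ) (⟪x - ⟪y, x⟫_ℂ • y, c - ⟪y, c⟫_ℂ • y⟫_ℂ)
  rw [← key, norm_mul] at e4
  have e5 := mul_le_mul h1 h2 hA (norm_nonneg _)
  linarith

theorem backward_aux {n : ℕ} (x c : EuclideanSpace ℂ (Fin n)) (hx : ‖x‖ = 1)
    (hc : ‖c‖ = 1) (A B r ε : ℝ) (hA : 0 ≤ A) (hB : 0 ≤ B) (hr : 0 ≤ r) (hε : 0 ≤ ε)
    (hAr : r ^ 2 + A ^ 2 = 1) (hBε : ε ^ 2 + B ^ 2 = 1) (hK : 0 ≤ A * B - r * ε)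
    (h : A * B - r * ε ≤ ‖⟪x, c⟫_ℂ‖) :
    ∃ y : EuclideanSpace ℂ (Fin n), ‖y‖ = 1 ∧ A ≤ ‖⟪y, c⟫_ℂ‖ ∧ B ≤ ‖⟪x, y⟫_ℂ‖ := by
  have hcc : ⟪c, c⟫_ℂ = 1 := by rw [inner_self_eq_norm_sq_to_K, hc]; simp
  have hxx : ⟪x, x⟫_ℂ = 1 := by rw [inner_self_eq_norm_sq_to_K, hx]; simp
  by_cases hs : A ≤ ‖⟪x, c⟫_ℂ‖
  · refine ⟨x, hx, hs, ?_⟩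
    rw [hxx, norm_one]
    nlinarith
  push Not at hs
  rw [norm_inner_symm] at h hs
  obtain ⟨v, hv, hvz⟩ := RCLike.exists_norm_mul_eq_self (⟪c, x⟫_ℂ)
  have hres := norm_sq_residual x c hx hc
  have hw : ⟪c, x - ⟪c, x⟫_ℂ • c⟫_ℂ = 0 := by
    rw [inner_sub_right, inner_smul_right, hcc]; ring
  have hxw : ⟪x, x - ⟪c, x⟫_ℂ • c⟫_ℂ = ((‖x - ⟪c, x⟫_ℂ • c‖ ^ 2 : ℝ) : ℂ) := by
    have h1 : ⟪x - ⟪c, x⟫_ℂ • c, x - ⟪c, x⟫_ℂ • c⟫_ℂ = ⟪x, x - ⟪c, x⟫_ℂ • c⟫_ℂ := by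
      rw [inner_sub_left x, inner_smul_left, hw]; ring
    rw [← h1, inner_self_eq_norm_sq_to_K]; simp
  have hxc : ⟪x, c⟫_ℂ * v = ((‖⟪c, x⟫_ℂ‖ : ℝ) : ℂ) := by
    have hvv : (starRingEnd ℂ) v * v = 1 := by
      rw [RCLike.conj_mul, hv]; simp
    rw [← inner_conj_symm x c]
    nth_rewrite 1 [← hvz]
    rw [map_mul, mul_right_comm, hvv]
    simp
  generalize x - ⟪c, x⟫_ℂ • c = w at *
  generalize ‖⟪c, x⟫_ℂ‖ = s at *
  have ht0 := norm_nonneg w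
  generalize htt : ‖w‖ = t at *
  have hs0 : 0 ≤ s := hK.trans h
  have hrt : r < t := by
    apply lt_of_pow_lt_pow_left₀ 2 ht0
    nlinarith
  have ht : 0 < t := hr.trans_lt hrt
  refine ⟨((A : ℂ) * v) • c + ((r / t : ℝ) : ℂ) • w, ?_, ?_, ?_⟩
  · have : ‖((A : ℂ) * v) • c + ((r / t : ℝ) : ℂ) • w‖ ^ 2 = 1 := by
      rw [@norm_add_sq ℂ, inner_smul_left, inner_smul_right, hw, norm_smul, norm_smul, norm_mul,
        hv, hc, htt, Complex.norm_real, Complex.norm_real, Real.norm_of_nonneg hA,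
        Real.norm_of_nonneg (by positivity), div_mul_cancel₀ _ ht.ne']
      simp
      linarith
    exact (pow_eq_one_iff_of_nonneg (norm_nonneg _) two_ne_zero).1 this
  · rw [norm_inner_symm, inner_add_right, inner_smul_right, inner_smul_right, hw, hcc]
    simp [hv, abs_of_nonneg hA]
  · have : ⟪x, ((A : ℂ) * v) • c + ((r / t : ℝ) : ℂ) • w⟫_ℂ = ((s * A + r * t : ℝ) : ℂ) := by
      rw [inner_add_right, inner_smul_right, inner_smul_right, hxw]
      have : (A : ℂ) * v * ⟪x, c⟫_ℂ = A * (⟪x, c⟫_ℂ * v) := by ring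
      rw [this, hxc, ← Complex.ofReal_mul, ← Complex.ofReal_mul, ← Complex.ofReal_add]
      congr 1
      field_simp
    rw [this, Complex.norm_real, Real.norm_of_nonneg (by positivity)]
    have htr : t ≤ r * B + ε * A := by
      refine le_of_sq_le_sq_aux ?_ (by positivity)
      have e : (r * B + ε * A) ^ 2 = 1 - (A * B - r * ε) ^ 2 := by
        have : (r * B + ε * A) ^ 2 + (A * B - r * ε) ^ 2
          = (r ^ 2 + A ^ 2) * (ε ^ 2 + B ^ 2) := by ring
        rw [hAr, hBε] at this; linarith
      rw [e, hres]
      nlinarith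
    have hq0 : 0 ≤ t * A - s * r := by nlinarith
    have hq : t * A - s * r ≤ ε := by
      have e1 := mul_le_mul_of_nonneg_right htr hA
      have e2 := mul_le_mul_of_nonneg_right h hr
      have e3 : (r * B + ε * A) * A - (A * B - r * ε) * r = ε * (r ^ 2 + A ^ 2) := by ring
      rw [hAr] at e3
      linarith
    refine le_of_sq_le_sq_aux ?_ (by positivity)
    have e : (s * A + r * t) ^ 2 + (t * A - s * r) ^ 2 = (r ^ 2 + A ^ 2) * (t ^ 2 + s ^ 2) := by
      ring
    rw [hAr, hres] at e
    nlinarith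

/-- In the metric space of pure states with trace distance, the `ε`-expansion
of the closed ball of radius `r` around a pure state `c` is the closed ball of
radius `r' = r√(1-ε²) + ε√(1-r²)` around `c`, provided the corresponding
Bures angles sum to at most `π/2`. -/
theorem pure_sphere_expansion
    {n : ℕ} (c : EuclideanSpace ℂ (Fin n)) (hc : c ∈ pureStates n)
    (r ε : ℝ) (hr0 : 0 ≤ r) (hr1 : r ≤ 1) (hε0 : 0 ≤ ε) (hε1 : ε ≤ 1)
    (hangle : Real.arcsin r + Real.arcsin ε ≤ Real.pi / 2) :
    pureExpansion (pureSphere c r) ε =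
      pureSphere c (r * Real.sqrt (1 - ε ^ 2) + ε * Real.sqrt (1 - r ^ 2)) := by
  have hA := Real.sqrt_nonneg (1 - r ^ 2)
  have hB := Real.sqrt_nonneg (1 - ε ^ 2)
  have hAr : r ^ 2 + Real.sqrt (1 - r ^ 2) ^ 2 = 1 := by
    rw [Real.sq_sqrt (by nlinarith)]; ring
  have hBε : ε ^ 2 + Real.sqrt (1 - ε ^ 2) ^ 2 = 1 := by
    rw [Real.sq_sqrt (by nlinarith)]; ring
  have hK : 0 ≤ Real.sqrt (1 - r ^ 2) * Real.sqrt (1 - ε ^ 2) - r * ε := by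
    have h1 := Real.cos_nonneg_of_neg_pi_div_two_le_of_le (x := Real.arcsin r + Real.arcsin ε)
      (by linarith [Real.arcsin_nonneg.2 hr0, Real.arcsin_nonneg.2 hε0, Real.pi_pos]) hangle
    rwa [Real.cos_add, Real.cos_arcsin, Real.cos_arcsin, Real.sin_arcsin (by linarith) hr1,
      Real.sin_arcsin (by linarith) hε1] at h1
  generalize Real.sqrt (1 - r ^ 2) = A at *
  generalize Real.sqrt (1 - ε ^ 2) = B at *
  have hR : (r * B + ε * A) ^ 2 + (A * B - r * ε) ^ 2 = 1 := by
    have : (r * B + ε * A) ^ 2 + (A * B - r * ε) ^ 2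
      = (r ^ 2 + A ^ 2) * (ε ^ 2 + B ^ 2) := by ring
    rw [this, hAr, hBε, one_mul]
  ext x
  simp only [pureExpansion, pureSphere, pureStates, Set.mem_setOf_eq] at hc ⊢
  rw [traceDist_le_iff_aux x c _ _ (by positivity) hK hR]
  constructor
  · rintro ⟨hx, y, ⟨hy, hyc⟩, hxy⟩
    rw [traceDist_le_iff_aux _ _ r A hr0 hA hAr] at hyc
    rw [traceDist_le_iff_aux _ _ ε B hε0 hB hBε] at hxy
    exact ⟨hx, forward_aux x y c hx hy hc A B r ε hA hB hr0 hε0 hAr hBε hxy hyc⟩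
  · rintro ⟨hx, h⟩
    obtain ⟨y, hy, h1, h2⟩ := backward_aux x c hx hc A B r ε hA hB hr0 hε0 hAr hBε hK h
    exact ⟨hx, y, ⟨hy, (traceDist_le_iff_aux _ _ r A hr0 hA hAr).2 h1⟩,
      (traceDist_le_iff_aux _ _ ε B hε0 hB hBε).2 h2⟩
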